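/- Let X_1^n be an exchangeable random vector with values in a discrete (finite or countably infinite) set S such that the Shannon entropy H(X_1) is finite. Then there exists a probability measure μ*_n on (ℳ(S),ℱ) such that, for every k with k ≤ n − 2, the distribution P_k of X_1^k satisfies D(P_k ‖ M_{k,μ*_n}) ≤ [k(k−1)/(2(n−k−1))] · H(X_1). -/

import Mathlib

open MeasureTheory
open scoped ENNReal

/-- The space `ℳ(S)` of probability measures on a measurable space `S`, equipped with
the σ-algebra `ℱ` generated by the evaluation maps `P ↦ P(A)`, `A` measurable
(obtained here as the subtype σ-algebra of the canonical σ-algebra on measures). -/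
noncomputable instance probabilityMeasureMeasurableSpace
    {α : Type*} [MeasurableSpace α] : MeasurableSpace (ProbabilityMeasure α) :=
  Subtype.instMeasurableSpace

open Classical in
/-- The Kullback–Leibler divergence (relative entropy) `D(μ‖ν)` between two measures,
defined as `∫ log (dμ/dν) dμ` when `μ ≪ ν` and this integral makes sense, and `+∞` otherwise. -/
noncomputable def klDiv {α : Type*} [MeasurableSpace α] (μ ν : Measure α) : ℝ≥0∞ :=
  if μ ≪ ν ∧ Integrable (llr μ ν) μ then ENNReal.ofReal (∫ x, llr μ ν x ∂μ) else ⊤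

/-- The Shannon entropy `H(μ) = −Σₓ μ{x} log μ{x}` (natural logarithm) of a discrete
probability measure. -/
noncomputable def shannonEntropy {α : Type*} [MeasurableSpace α] (μ : Measure α) : ℝ :=
  ∑' x : α, -((μ {x}).toReal * Real.log (μ {x}).toReal)


namespace DF

open Classical in
/-- Number of indices `l ≥ m` with `ω l = ω a`. -/
noncomputable def cnt {S : Type*} {n : ℕ} (m : ℕ) (ω : Fin n → S) (a : Fin n) : ℕ :=
  (Finset.univ.filter (fun l : Fin n => m ≤ l.val ∧ ω l = ω a)).card

lemma cnt_perm {S : Type*} {n : ℕ} (m : ℕ) (ω : Fin n → S) (a : Fin n) (σ : Equiv.Perm (Fin n))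
    (hσ : ∀ l, m ≤ (σ l).val ↔ m ≤ l.val) : cnt m (ω ∘ σ) a = cnt m ω (σ a) := by
  classical
  unfold cnt
  refine Finset.card_bij (fun l _ => σ l) ?_ ?_ ?_
  · intro l hl
    simpa [hσ] using hl
  · intro l _ l' _ h
    exact σ.injective h
  · intro l hl
    refine ⟨σ.symm l, ?_, by simp⟩
    have := hσ (σ.symm l)
    simp only [Equiv.apply_symm_apply] at this
    simpa [← this] using hl

lemma swap_pres {n : ℕ} {m : ℕ} {a b : Fin n} (ha : m ≤ a.val) (hb : m ≤ b.val) (l : Fin n) :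
    m ≤ (Equiv.swap a b l).val ↔ m ≤ l.val := by
  rcases eq_or_ne l a with rfl | h1
  · simp [ha, hb]
  rcases eq_or_ne l b with rfl | h2
  · simp [ha, hb]
  rw [Equiv.swap_apply_of_ne_of_ne h1 h2]

lemma cnt_pos {S : Type*} {n : ℕ} {m : ℕ} (ω : Fin n → S) {a : Fin n} (h : m ≤ a.val) :
    0 < cnt m ω a := by
  classical
  unfold cnt
  exact Finset.card_pos.2 ⟨a, by simp [h]⟩

lemma cnt_le {S : Type*} {n : ℕ} (m : ℕ) (ω : Fin n → S) (a : Fin n) : cnt m ω a ≤ n := by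
  classical
  unfold cnt
  exact (Finset.card_le_univ _).trans (by simp)

lemma cnt_anti {S : Type*} {n : ℕ} (m : ℕ) (ω : Fin n → S) (a : Fin n) : cnt m ω a ≤ cnt 0 ω a := by
  classical
  unfold cnt
  refine Finset.card_le_card ?_
  intro l; simp

lemma cnt_congr {S : Type*} {n : ℕ} (m : ℕ) (ω : Fin n → S) {a b : Fin n} (h : ω a = ω b) :
    cnt m ω a = cnt m ω b := by
  unfold cnt; rw [h]

lemma inner {S : Type*} {n : ℕ} (m : ℕ) (ω : Fin n → S) (G : S → ℝ≥0∞) :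
    ∑ j ∈ Finset.univ.filter (fun j : Fin n => m ≤ j.val),
      G (ω j) * ((cnt 0 ω j : ℝ≥0∞) * (cnt m ω j : ℝ≥0∞)⁻¹) ≤ ∑ j, G (ω j) := by
  classical
  have h1 : ∀ j : Fin n, G (ω j) * ((cnt 0 ω j : ℝ≥0∞) * (cnt m ω j : ℝ≥0∞)⁻¹)
      = ∑ l, if ω l = ω j then G (ω l) * (cnt m ω l : ℝ≥0∞)⁻¹ else 0 := by
    intro j
    have : ∀ l, (if ω l = ω j then G (ω l) * (cnt m ω l : ℝ≥0∞)⁻¹ else 0)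
      = if ω l = ω j then G (ω j) * (cnt m ω j : ℝ≥0∞)⁻¹ else 0 := by
      intro l
      split_ifs with h
      · rw [h, cnt_congr m ω h]
      · rfl
    simp_rw [this]
    rw [← Finset.sum_filter, Finset.sum_const]
    have : (Finset.univ.filter (fun l : Fin n => ω l = ω j)).card = cnt 0 ω j := by
      simp [cnt]
    rw [this, nsmul_eq_mul]
    ring
  simp_rw [h1]
  rw [Finset.sum_comm]
  refine Finset.sum_le_sum fun l _ => ?_
  rw [← Finset.sum_filter, Finset.sum_const, Finset.filter_filter]
  have : (Finset.univ.filter (fun j : Fin n => m ≤ j.val ∧ ω l = ω j)).card = cnt m ω l := by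
    unfold cnt
    congr 1
    ext j
    simp [eq_comm]
  rw [this, nsmul_eq_mul, mul_comm, mul_assoc]
  calc _ ≤ G (ω l) * 1 := by gcongr; exact ENNReal.inv_mul_le_one _
    _ = _ := mul_one _

/-- first `k` coordinates -/
def fst' {S : Type*} {n k : ℕ} (h : k ≤ n) (ω : Fin n → S) : Fin k → S :=
  fun i => ω (Fin.castLE h i)

noncomputable def wt {S : Type*} {n : ℕ} (i : ℕ) (ω : Fin n → S) (a : Fin n) : ℝ≥0∞ :=
  ((n - i : ℕ) : ℝ≥0∞) * ((cnt 0 ω a : ℝ≥0∞) * (cnt i ω a : ℝ≥0∞)⁻¹)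

noncomputable def Wt {S : Type*} {n k : ℕ} (h : k ≤ n) (ω : Fin n → S) : ℝ≥0∞ :=
  ∏ i : Fin k, wt i.val ω (Fin.castLE h i)

section
variable {S : Type*} [Countable S] [MeasurableSpace S] [MeasurableSingletonClass S] {n : ℕ}
    (P : Measure (Fin n → S))

lemma lint_perm (hexch : ∀ σ : Equiv.Perm (Fin n), P.map (fun x => x ∘ σ) = P)
    (σ : Equiv.Perm (Fin n)) (Φ : (Fin n → S) → ℝ≥0∞) :
    ∫⁻ ω, Φ (ω ∘ σ) ∂P = ∫⁻ ω, Φ ω ∂P := by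
  conv_rhs => rw [← hexch σ]
  rw [lintegral_map (Measurable.of_discrete) (Measurable.of_discrete)]

lemma int_perm (hexch : ∀ σ : Equiv.Perm (Fin n), P.map (fun x => x ∘ σ) = P)
    (σ : Equiv.Perm (Fin n)) (Φ : (Fin n → S) → ℝ) :
    ∫ ω, Φ (ω ∘ σ) ∂P = ∫ ω, Φ ω ∂P := by
  conv_rhs => rw [← hexch σ]
  rw [integral_map (Measurable.of_discrete).aemeasurable
    (Measurable.of_discrete).aestronglyMeasurable]

lemma key (hexch : ∀ σ : Equiv.Perm (Fin n), P.map (fun x => x ∘ σ) = P)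
    (k : ℕ) (h : k ≤ n) (F : (Fin n → S) → (Fin k → S) → ℝ≥0∞)
    (hF : ∀ (σ : Equiv.Perm (Fin n)) ω y, F (ω ∘ σ) y = F ω y) :
    ∫⁻ ω, F ω (fst' h ω) * Wt h ω ∂P ≤ ∫⁻ ω, ∑ e : Fin k → Fin n, F ω (ω ∘ e) ∂P := by
  classical
  induction k with
  | zero =>
    refine lintegral_mono fun ω => ?_
    simp only [Wt, Finset.univ_eq_empty, Finset.prod_empty, mul_one]
    rw [Fintype.sum_unique]
    exact le_of_eq (congrArg _ (Subsingleton.elim _ _))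
  | succ k ih =>
    have hk : k ≤ n := by omega
    have hfst : ∀ ω : Fin n → S, fst' h ω = Fin.snoc (α := fun _ => S) (fst' hk ω) (ω ⟨k, h⟩) := by
      intro ω
      funext i
      refine Fin.lastCases ?_ (fun i => ?_) i
      · rw [Fin.snoc_last]; rfl
      · rw [Fin.snoc_castSucc]; rfl
    have hW : ∀ ω : Fin n → S, Wt h ω = Wt hk ω * wt k ω ⟨k, h⟩ := by
      intro ω
      unfold Wt
      rw [Fin.prod_univ_castSucc]
      rfl
    set T : Fin n → (Fin n → S) → ℝ≥0∞ := fun j ω =>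
      F ω (Fin.snoc (α := fun _ => S) (fst' hk ω) (ω j)) *
        ((cnt 0 ω j : ℝ≥0∞) * (cnt k ω j : ℝ≥0∞)⁻¹) * Wt hk ω with hT
    have hswap : ∀ j : Fin n, k ≤ j.val → ∫⁻ ω, T j ω ∂P = ∫⁻ ω, T ⟨k, h⟩ ω ∂P := by
      intro j hj
      set σ := Equiv.swap (⟨k, h⟩ : Fin n) j with hσ
      rw [← lint_perm P hexch σ (T ⟨k, h⟩)]
      refine lintegral_congr fun ω => ?_
      have hfix : ∀ l : Fin n, l.val < k → σ l = l := by
        intro l hl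
        refine Equiv.swap_apply_of_ne_of_ne ?_ ?_
        · intro h'; rw [h'] at hl; simp at hl
        · intro h'; rw [h'] at hl; omega
      have e1 : fst' hk (ω ∘ σ) = fst' hk ω := by
        funext i
        simp only [fst', Function.comp]
        rw [hfix _ (by simp)]
      have e2 : Wt hk (ω ∘ σ) = Wt hk ω := by
        unfold Wt
        refine Finset.prod_congr rfl fun i _ => ?_
        unfold wt
        have hi := i.isLt
        rw [cnt_perm 0 ω _ σ (by simp), cnt_perm i ω _ σ (fun l => swap_pres (by simp)
          (by omega) l), hfix _ (by simp)]
      have e3 : σ ⟨k, h⟩ = j := by simp [hσ]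
      simp only [hT]
      rw [e1, e2, hF, cnt_perm 0 ω _ σ (by simp), cnt_perm k ω _ σ (fun l => swap_pres (by simp)
          (by omega) l), Function.comp, e3]
    have hcard : (Finset.univ.filter (fun j : Fin n => k ≤ j.val)).card = n - k := by
      have : (Finset.univ.filter (fun j : Fin n => k ≤ j.val)) = Finset.Ici ⟨k, h⟩ := by
        ext j; simp [Fin.le_def]
      rw [this]; simp
    calc ∫⁻ ω, F ω (fst' h ω) * Wt h ω ∂P
        = ∫⁻ ω, ((n - k : ℕ) : ℝ≥0∞) * T ⟨k, h⟩ ω ∂P := by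
          refine lintegral_congr fun ω => ?_
          rw [hfst, hW, hT, wt]; ring
      _ = ((n - k : ℕ) : ℝ≥0∞) * ∫⁻ ω, T ⟨k, h⟩ ω ∂P :=
          lintegral_const_mul _ Measurable.of_discrete
      _ = ∑ j ∈ Finset.univ.filter (fun j : Fin n => k ≤ j.val), ∫⁻ ω, T j ω ∂P := by
          rw [Finset.sum_congr rfl (fun j hj => hswap j (by simpa using hj)), Finset.sum_const,
            hcard, nsmul_eq_mul]
      _ = ∫⁻ ω, ∑ j ∈ Finset.univ.filter (fun j : Fin n => k ≤ j.val), T j ω ∂P := by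
          rw [lintegral_finsetSum _ (fun _ _ => Measurable.of_discrete)]
      _ ≤ ∫⁻ ω, (∑ j, F ω (Fin.snoc (α := fun _ => S) (fst' hk ω) (ω j))) * Wt hk ω ∂P := by
          refine lintegral_mono fun ω => ?_
          simp only [hT]
          rw [← Finset.sum_mul]
          gcongr
          exact inner k ω (fun x => F ω (Fin.snoc (α := fun _ => S) (fst' hk ω) x))
      _ ≤ ∫⁻ ω, ∑ e : Fin k → Fin n, ∑ j, F ω (Fin.snoc (α := fun _ => S) (ω ∘ e) (ω j)) ∂P := by
          refine ih hk (fun ω y => ∑ j, F ω (Fin.snoc (α := fun _ => S) y (ω j))) ?_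
          intro σ ω y
          simp only [hF, Function.comp]
          exact Equiv.sum_comp σ (fun j => F ω (Fin.snoc (α := fun _ => S) y (ω j)))
      _ = _ := by
          refine lintegral_congr fun ω => ?_
          rw [← Equiv.sum_comp (Fin.snocEquiv (fun _ : Fin (k+1) => Fin n)), Fintype.sum_prod_type,
            Finset.sum_comm]
          refine Finset.sum_congr rfl fun j _ => Finset.sum_congr rfl fun e _ => ?_
          congr 1
          funext i
          refine Fin.lastCases ?_ (fun i => ?_) i
          · simp [Fin.snocEquiv]
          · simp [Fin.snocEquiv]

end

lemma elem_ineq {t a n : ℝ} (ht0 : 0 ≤ t) (ht1 : t ≤ 1) (ha : 1 ≤ a) (han : a ≤ n) :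
    Real.log ((1 + t * (a - 1)) / (1 + t * (n - 1))) ≤ t * Real.log (a / n) := by
  have ha0 : 0 < a := by linarith
  have hn0 : 0 < n := by linarith
  have hA : 0 < 1 + t * (a - 1) := by nlinarith
  have hN : 0 < 1 + t * (n - 1) := by nlinarith
  have h1 : t * Real.log (n / a) ≤ Real.log ((1 + t * (n - 1)) / (1 + t * (a - 1))) := by
    rw [← Real.log_rpow (by positivity)]
    refine Real.log_le_log (by positivity) ?_
    have hb := rpow_one_add_le_one_add_mul_self (s := n / a - 1) (p := t)
      (by have : 0 < n / a := by positivity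
          linarith) ht0 ht1
    have : (1 + (n / a - 1)) = n / a := by ring
    rw [this] at hb
    refine hb.trans ?_
    have e1 : 1 + t * (n / a - 1) = 1 + (t * (n - a)) / a := by field_simp
    have e2 : (1 + t * (n - 1)) / (1 + t * (a - 1)) = 1 + (t * (n - a)) / (1 + t * (a - 1)) := by
      field_simp; ring
    rw [e1, e2]
    have : 0 ≤ t * (n - a) := mul_nonneg ht0 (by linarith)
    gcongr
    nlinarith
  have e1 : Real.log (a / n) = - Real.log (n / a) := by
    rw [← Real.log_inv, inv_div]
  have e2 : Real.log ((1 + t * (a - 1)) / (1 + t * (n - 1)))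
      = - Real.log ((1 + t * (n - 1)) / (1 + t * (a - 1))) := by
    rw [← Real.log_inv, inv_div]
  rw [e1, e2]; linarith

section
variable {S : Type*} [Countable S] [MeasurableSpace S] [MeasurableSingletonClass S] {n : ℕ}
    (P : Measure (Fin n → S)) [IsProbabilityMeasure P]

lemma integ (m : ℕ) (i : Fin n) (ψ : ℕ → ℕ → ℝ) :
    Integrable (fun ω => ψ (cnt m ω i) (cnt 0 ω i)) P := by
  refine Integrable.of_bound (Measurable.of_discrete).aestronglyMeasurable
    (∑ p ∈ Finset.range (n+1), ∑ q ∈ Finset.range (n+1), |ψ p q|) (ae_of_all _ fun ω => ?_)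
  rw [Real.norm_eq_abs]
  refine le_trans ?_ (Finset.single_le_sum (f := fun p => ∑ q ∈ Finset.range (n+1), |ψ p q|)
    (fun p _ => Finset.sum_nonneg fun q _ => abs_nonneg _)
    (Finset.mem_range.2 (Nat.lt_succ_of_le (cnt_le m ω i))))
  exact Finset.single_le_sum (f := fun q => |ψ (cnt m ω i) q|)
    (fun p _ => abs_nonneg _) (Finset.mem_range.2 (Nat.lt_succ_of_le (cnt_le 0 ω i)))

lemma stepE (hexch : ∀ σ : Equiv.Perm (Fin n), P.map (fun x => x ∘ σ) = P)
    (i : Fin n) (hn : 2 ≤ n) (t : ℝ) (ht : t = ((n : ℝ) - i - 1) / (n - 1)) :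
    ∫ ω, Real.log ((cnt i ω i : ℝ) / ((n : ℝ) - i)) ∂P
      ≤ t * ∫ ω, Real.log ((cnt 0 ω i : ℝ) / n) ∂P := by
  classical
  have hi := i.isLt
  have hnR : (2 : ℝ) ≤ n := by exact_mod_cast hn
  have hiR : (i : ℝ) + 1 ≤ n := by exact_mod_cast hi
  have hi0 : (0 : ℝ) ≤ (i : ℕ) := Nat.cast_nonneg _
  have hn1 : (0 : ℝ) < (n : ℝ) - 1 := by linarith
  have ht0 : 0 ≤ t := by rw [ht]; apply div_nonneg <;> linarith
  have ht1 : t ≤ 1 := by rw [ht, div_le_one hn1]; linarith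
  have htm : 1 + t * ((n : ℝ) - 1) = n - i := by rw [ht]; field_simp; ring
  have hN1 : ∀ ω : Fin n → S, (1 : ℝ) ≤ cnt 0 ω i := fun ω => by
    exact_mod_cast cnt_pos ω (Nat.zero_le _)
  have hNn : ∀ ω : Fin n → S, (cnt 0 ω i : ℝ) ≤ n := fun ω => by
    exact_mod_cast cnt_le 0 ω i
  have hA1 : ∀ ω : Fin n → S, (1 : ℝ) ≤ cnt i ω i := fun ω => by
    exact_mod_cast cnt_pos ω le_rfl
  set B : (Fin n → S) → ℝ := fun ω => 1 + t * ((cnt 0 ω i : ℝ) - 1) with hB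
  have hB1 : ∀ ω, 1 ≤ B ω := fun ω => by
    have := mul_nonneg ht0 (sub_nonneg.2 (hN1 ω)); simp only [hB]; linarith
  -- indicator terms
  set u : Fin n → (Fin n → S) → ℝ := fun j ω => if ω j = ω i then (B ω)⁻¹ else 0 with hu
  have hui : ∀ j, Integrable (u j) P := by
    intro j
    refine Integrable.of_bound (Measurable.of_discrete).aestronglyMeasurable 1
      (ae_of_all _ fun ω => ?_)
    simp only [hu]
    split_ifs
    · rw [Real.norm_eq_abs, abs_of_nonneg (inv_nonneg.2 (by linarith [hB1 ω]))]
      exact inv_le_one_of_one_le₀ (hB1 ω)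
    · simp
  have hsum : ∀ (m : ℕ) ω, ∑ j ∈ Finset.univ.filter (fun j : Fin n => m ≤ j.val), u j ω
      = (cnt m ω i : ℝ) * (B ω)⁻¹ := by
    intro m ω
    simp only [hu]
    rw [← Finset.sum_filter, Finset.filter_filter, Finset.sum_const, nsmul_eq_mul]
    rfl
  have huu : ∀ j j' : Fin n, j ≠ i → j' ≠ i → ∫ ω, u j ω ∂P = ∫ ω, u j' ω ∂P := by
    intro j j' hj hj'
    rw [← int_perm P hexch (Equiv.swap j j') (u j)]
    refine integral_congr_ae (ae_of_all _ fun ω => ?_)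
    simp only [hu, hB, Function.comp]
    have := cnt_perm 0 ω i (Equiv.swap j j') (by simp)
    rw [Equiv.swap_apply_of_ne_of_ne hj.symm hj'.symm] at this
    rw [this]
    simp [Equiv.swap_apply_of_ne_of_ne hj.symm hj'.symm]
  obtain ⟨j0, hj0⟩ : ∃ j0 : Fin n, j0 ≠ i := by
    have : Nontrivial (Fin n) := Fin.nontrivial_iff_two_le.2 hn
    exact exists_ne i
  set v := ∫ ω, u j0 ω ∂P with hv
  have hsumint : ∀ m : ℕ, m ≤ i.val → ∫ ω, (cnt m ω i : ℝ) * (B ω)⁻¹ ∂P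
      = ∫ ω, (B ω)⁻¹ ∂P + ((n : ℝ) - m - 1) * v := by
    intro m hm
    simp_rw [← hsum m]
    rw [integral_finsetSum _ (fun j _ => hui j)]
    have hmem : i ∈ Finset.univ.filter (fun j : Fin n => m ≤ j.val) := by simp [hm]
    rw [← Finset.add_sum_erase _ _ hmem]
    congr 1
    · simp [hu]
    · rw [Finset.sum_congr rfl (fun j hj => huu j j0 (Finset.ne_of_mem_erase hj) hj0),
        Finset.sum_const, Finset.card_erase_of_mem hmem]
      have hcard : (Finset.univ.filter (fun j : Fin n => m ≤ j.val)).card = n - m := by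
        have : (Finset.univ.filter (fun j : Fin n => m ≤ j.val)) = Finset.Ici ⟨m, by omega⟩ := by
          ext j; simp [Fin.le_def]
        rw [this]; simp
      rw [hcard, nsmul_eq_mul, Nat.cast_sub (by omega), Nat.cast_sub (by omega), hv]
      simp only [Nat.cast_one]
  have hBi : Integrable (fun ω => (B ω)⁻¹) P :=
    integ P 0 i (fun _ q => (1 + t * ((q : ℝ) - 1))⁻¹)
  have hNB : Integrable (fun ω => (cnt 0 ω i : ℝ) * (B ω)⁻¹) P :=
    integ P 0 i (fun _ q => (q : ℝ) * (1 + t * ((q : ℝ) - 1))⁻¹)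
  have hAB : Integrable (fun ω => (cnt i ω i : ℝ) * (B ω)⁻¹) P :=
    integ P i i (fun p q => (p : ℝ) * (1 + t * ((q : ℝ) - 1))⁻¹)
  have hone : ∫ ω, (cnt i ω i : ℝ) * (B ω)⁻¹ ∂P = 1 := by
    have h0 := hsumint 0 (Nat.zero_le _)
    have h1 := hsumint i le_rfl
    have h2 : (1 - t) * ∫ ω, (B ω)⁻¹ ∂P + t * ∫ ω, (cnt 0 ω i : ℝ) * (B ω)⁻¹ ∂P = 1 := by
      rw [← integral_const_mul, ← integral_const_mul, ← integral_add (hBi.const_mul _)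
        (hNB.const_mul _)]
      have : ∀ ω, (1 - t) * (B ω)⁻¹ + t * ((cnt 0 ω i : ℝ) * (B ω)⁻¹) = 1 := by
        intro ω
        have hb : B ω ≠ 0 := by linarith [hB1 ω]
        field_simp
        simp only [hB]; ring
      simp [this]
    have h3 : (n : ℝ) - i - 1 = t * (n - 1) := by linarith
    rw [h1, h3]
    rw [h0] at h2
    push_cast at h2
    linarith
  have hL : Integrable (fun ω => Real.log ((cnt 0 ω i : ℝ) / n)) P :=
    integ P 0 i (fun _ q => Real.log ((q : ℝ) / n))
  calc ∫ ω, Real.log ((cnt i ω i : ℝ) / ((n : ℝ) - i)) ∂P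
      ≤ ∫ ω, (t * Real.log ((cnt 0 ω i : ℝ) / n) + ((cnt i ω i : ℝ) * (B ω)⁻¹ - 1)) ∂P := by
        refine integral_mono (integ P i i (fun p _ => Real.log ((p : ℝ) / ((n : ℝ) - i))))
          ((hL.const_mul t).add (hAB.sub (integrable_const 1))) fun ω => ?_
        have hb : 0 < B ω := by linarith [hB1 ω]
        have ha : (0 : ℝ) < cnt i ω i := by linarith [hA1 ω]
        have hm : (0 : ℝ) < n - i := by linarith
        have e : (cnt i ω i : ℝ) / ((n : ℝ) - i)
          = (B ω / (n - i)) * ((cnt i ω i : ℝ) * (B ω)⁻¹) := by field_simp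
        have h1 := Real.log_le_sub_one_of_pos (x := (cnt i ω i : ℝ) * (B ω)⁻¹) (by positivity)
        have h2 := elem_ineq ht0 ht1 (hN1 ω) (hNn ω)
        rw [htm] at h2
        simp only
        rw [e, Real.log_mul (by positivity) (by positivity)]
        exact add_le_add h2 h1
    _ = _ := by
        have hAB' : Integrable (fun ω => (cnt i ω i : ℝ) * (B ω)⁻¹ - 1) P :=
          hAB.sub (integrable_const 1)
        rw [integral_add (hL.const_mul t) hAB', integral_sub hAB (integrable_const 1), hone, integral_const_mul]
        simp

lemma logN_eq (hexch : ∀ σ : Equiv.Perm (Fin n), P.map (fun x => x ∘ σ) = P) (i j : Fin n) :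
    ∫ ω, Real.log ((cnt 0 ω i : ℝ) / n) ∂P = ∫ ω, Real.log ((cnt 0 ω j : ℝ) / n) ∂P := by
  rw [← int_perm P hexch (Equiv.swap i j) (fun ω => Real.log ((cnt 0 ω i : ℝ) / n))]
  refine integral_congr_ae (ae_of_all _ fun ω => ?_)
  simp only
  rw [cnt_perm 0 ω i _ (by simp)]
  simp

lemma entE (hn : 0 < n) (hexch : ∀ σ : Equiv.Perm (Fin n), P.map (fun x => x ∘ σ) = P)
    (hH : Summable fun x : S =>
      -((P.map (fun ω => ω ⟨0, hn⟩) {x}).toReal *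
          Real.log (P.map (fun ω => ω ⟨0, hn⟩) {x}).toReal)) :
    - ∫ ω, Real.log ((cnt 0 ω ⟨0, hn⟩ : ℝ) / n) ∂P
      ≤ shannonEntropy (P.map (fun ω => ω ⟨0, hn⟩)) := by
  classical
  set i0 : Fin n := ⟨0, hn⟩ with hi0
  have hnR : (0 : ℝ) < n := by exact_mod_cast hn
  have hmeas : Measurable (fun ω : Fin n → S => ω i0) := Measurable.of_discrete
  set μ := P.map (fun ω => ω i0) with hμ
  have : IsProbabilityMeasure μ := Measure.isProbabilityMeasure_map hmeas.aemeasurable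
  set p : S → ℝ := fun x => (μ {x}).toReal with hp
  have hp0 : ∀ x, 0 ≤ p x := fun x => ENNReal.toReal_nonneg
  have hp1 : ∀ x, p x ≤ 1 := fun x => by
    have : μ.real {x} ≤ 1 := measureReal_le_one
    exact this
  -- log p is integrable
  have hlogint : Integrable (fun x => Real.log (p x)) μ := by
    refine ⟨(Measurable.of_discrete).aestronglyMeasurable, ?_⟩
    rw [hasFiniteIntegral_iff_norm, lintegral_countable']
    have : ∀ x, ENNReal.ofReal ‖Real.log (p x)‖ * μ {x}
        = ENNReal.ofReal (-(p x * Real.log (p x))) := by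
      intro x
      have h1 : μ {x} = ENNReal.ofReal (p x) := (ENNReal.ofReal_toReal (measure_ne_top _ _)).symm
      rw [h1, ← ENNReal.ofReal_mul (norm_nonneg _), Real.norm_eq_abs,
        abs_of_nonpos (Real.log_nonpos (hp0 x) (hp1 x))]
      congr 1; ring
    simp_rw [this]
    exact hH.tsum_ofReal_lt_top
  have hHeq : shannonEntropy μ = - ∫ ω, Real.log (p (ω i0)) ∂P := by
    rw [← integral_map (f := fun x => Real.log (p x)) hmeas.aemeasurable
      (Measurable.of_discrete).aestronglyMeasurable, integral_countable hlogint, shannonEntropy,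
      tsum_neg]
    rfl
  have hlogint' : Integrable (fun ω => Real.log (p (ω i0))) P :=
    hlogint.comp_measurable hmeas
  have hpos : ∀ᵐ ω ∂P, 0 < p (ω i0) := by
    have : ∀ᵐ x ∂μ, 0 < p x := by
      rw [ae_iff, ← nonpos_iff_eq_zero]
      have hs : {x | ¬ 0 < p x} = ⋃ x ∈ {x | ¬ 0 < p x}, {x} := (Set.biUnion_of_singleton _).symm
      rw [hs]
      refine (measure_biUnion_le μ (Set.to_countable _) _).trans ?_
      refine le_of_eq ?_
      rw [ENNReal.tsum_eq_zero]
      rintro ⟨x, hx⟩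
      have : p x = 0 := le_antisymm (not_lt.1 hx) (hp0 x)
      exact (ENNReal.toReal_eq_zero_iff _).1 this |>.resolve_right (measure_ne_top _ _)
    exact ae_of_ae_map hmeas.aemeasurable this
  have hN1 : ∀ (ω : Fin n → S) i, (1 : ℝ) ≤ cnt 0 ω i := fun ω i => by
    exact_mod_cast cnt_pos ω (Nat.zero_le _)
  set w : Fin n → (Fin n → S) → ℝ := fun j ω => p (ω j) / (cnt 0 ω j) with hw
  have hwi : ∀ j, Integrable (w j) P := by
    intro j
    refine Integrable.of_bound (Measurable.of_discrete).aestronglyMeasurable 1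
      (ae_of_all _ fun ω => ?_)
    simp only [hw]
    rw [Real.norm_eq_abs, abs_of_nonneg (div_nonneg (hp0 _) (Nat.cast_nonneg _)),
      div_le_one (by linarith [hN1 ω j])]
    linarith [hN1 ω j, hp1 (ω j)]
  have hww : ∀ j, ∫ ω, w j ω ∂P = ∫ ω, w i0 ω ∂P := by
    intro j
    rw [← int_perm P hexch (Equiv.swap i0 j) (w i0)]
    refine integral_congr_ae (ae_of_all _ fun ω => ?_)
    simp only [hw]
    rw [cnt_perm 0 ω _ _ (by simp)]
    simp
  have hle : ∀ ω, ∑ j, w j ω ≤ 1 := by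
    intro ω
    have h1 : ∑ j, w j ω = ∑ x ∈ Finset.univ.image ω, p x := by
      have hc : ∀ j, w j ω = (fun x => p x /
        ((Finset.univ.filter (fun l : Fin n => ω l = x)).card : ℝ)) (ω j) := by
        intro j
        simp only [hw, cnt, Nat.zero_le, true_and]
      simp_rw [hc]
      rw [Finset.sum_comp (fun x => p x /
        ((Finset.univ.filter (fun l : Fin n => ω l = x)).card : ℝ)) ω]
      refine Finset.sum_congr rfl fun x hx => ?_
      have : 0 < (Finset.univ.filter (fun l : Fin n => ω l = x)).card := by
        obtain ⟨l, _, hl⟩ := Finset.mem_image.1 hx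
        exact Finset.card_pos.2 ⟨l, by simp [hl]⟩
      have : (0 : ℝ) < (Finset.univ.filter (fun l : Fin n => ω l = x)).card := by
        exact_mod_cast this
      rw [nsmul_eq_mul]
      field_simp
    rw [h1]
    have h2 := sum_measureReal_singleton (μ := μ) (Finset.univ.image ω)
    have h3 : μ.real (Finset.univ.image ω : Finset S) ≤ 1 := measureReal_le_one
    rw [← h2] at h3
    exact h3
  have hfin : n * ∫ ω, w i0 ω ∂P ≤ 1 := by
    have h1 : ∫ ω, ∑ j, w j ω ∂P = n * ∫ ω, w i0 ω ∂P := by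
      rw [integral_finsetSum _ (fun j _ => hwi j), Finset.sum_congr rfl (fun j _ => hww j)]
      simp
    rw [← h1]
    calc _ ≤ ∫ ω, (1 : ℝ) ∂P := integral_mono (integrable_finsetSum _ (fun j _ => hwi j))
            (integrable_const 1) hle
      _ = 1 := by simp
  have hL : Integrable (fun ω => Real.log ((cnt 0 ω i0 : ℝ) / n)) P :=
    integ P 0 i0 (fun _ q => Real.log ((q : ℝ) / n))
  have hfinal : ∫ ω, (Real.log (p (ω i0)) - Real.log ((cnt 0 ω i0 : ℝ) / n)) ∂P
      ≤ ∫ ω, (n * w i0 ω - 1) ∂P := by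
    refine integral_mono_ae (hlogint'.sub hL) (((hwi i0).const_mul _).sub (integrable_const 1)) ?_
    filter_upwards [hpos] with ω hω
    have hN : (0 : ℝ) < cnt 0 ω i0 := by linarith [hN1 ω i0]
    rw [← Real.log_div hω.ne' (by positivity)]
    refine (Real.log_le_sub_one_of_pos (by positivity)).trans (le_of_eq ?_)
    simp only [hw]
    field_simp
  rw [integral_sub hlogint' hL, integral_sub ((hwi i0).const_mul _) (integrable_const 1),
    integral_const_mul] at hfinal
  simp only [integral_const, probReal_univ, smul_eq_mul, mul_one] at hfinal
  rw [hHeq]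
  linarith

end

section
variable {S : Type*} [Countable S] [MeasurableSpace S] [MeasurableSingletonClass S] {n : ℕ}
    (P : Measure (Fin n → S)) [IsProbabilityMeasure P]

/-- The empirical measure. -/
noncomputable def emp (hn : 0 < n) (ω : Fin n → S) : ProbabilityMeasure S :=
  ⟨(n : ℝ≥0∞)⁻¹ • ∑ j, Measure.dirac (ω j), ⟨by
    have : (n : ℝ≥0∞) ≠ 0 := by exact_mod_cast hn.ne'
    simp [ENNReal.inv_mul_cancel this (ENNReal.natCast_ne_top n)]⟩⟩

lemma pi_emp (hn : 0 < n) (ω : Fin n → S) (k : ℕ) (y : Fin k → S) [DecidableEq S] :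
    Measure.pi (fun _ : Fin k => (emp hn ω : Measure S)) {y}
      = ((n : ℝ≥0∞) ^ k)⁻¹ * ∑ e : Fin k → Fin n, if ω ∘ e = y then 1 else 0 := by
  rw [Measure.pi_singleton]
  have h1 : ∀ x, (emp hn ω : Measure S) {x}
      = (n : ℝ≥0∞)⁻¹ * ∑ j, if ω j = x then 1 else 0 := by
    intro x
    simp only [emp, ProbabilityMeasure.coe_mk, Measure.smul_apply, Measure.finsetSum_apply,
      smul_eq_mul]
    congr 1
    refine Finset.sum_congr rfl fun j _ => ?_
    rw [Measure.dirac_apply' _ (measurableSet_singleton x)]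
    simp [Set.indicator_apply]
  simp_rw [h1]
  rw [Finset.prod_mul_distrib, Finset.prod_const, Finset.card_univ, Fintype.card_fin,
    ENNReal.inv_pow, Fintype.prod_sum]
  congr 1
  refine Finset.sum_congr rfl fun e _ => ?_
  rw [Finset.prod_ite_zero]
  simp [funext_iff]

lemma lint_M (hn : 0 < n) (k : ℕ) (M : Measure (Fin k → S))
    (hM : ∀ A : Set (Fin k → S), MeasurableSet A →
            M A = ∫⁻ Q : ProbabilityMeasure S,
              Measure.pi (fun _ : Fin k => (Q : Measure S)) A ∂(P.map (emp hn)))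
    (F : (Fin k → S) → ℝ≥0∞) :
    ∫⁻ ω, ∑ e : Fin k → Fin n, F (ω ∘ e) ∂P = (n : ℝ≥0∞) ^ k * ∫⁻ y, F y ∂M := by
  classical
  have hn0 : (n : ℝ≥0∞) ^ k ≠ 0 := pow_ne_zero _ (by exact_mod_cast hn.ne')
  have hnt : (n : ℝ≥0∞) ^ k ≠ ⊤ := ENNReal.pow_ne_top (ENNReal.natCast_ne_top n)
  have h1 : ∀ y, (n : ℝ≥0∞) ^ k * M {y}
      = ∫⁻ ω, ∑ e : Fin k → Fin n, (if ω ∘ e = y then 1 else 0) ∂P := by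
    intro y
    rw [hM _ (measurableSet_singleton y), lintegral_map _ Measurable.of_discrete]
    · simp_rw [pi_emp]
      rw [lintegral_const_mul _ Measurable.of_discrete, ← mul_assoc,
        ENNReal.mul_inv_cancel hn0 hnt, one_mul]
    · simp_rw [Measure.pi_singleton]
      refine Finset.measurable_prod _ fun i _ => ?_
      exact (Measure.measurable_coe (measurableSet_singleton _)).comp measurable_subtype_coe
  rw [lintegral_countable' F, ← ENNReal.tsum_mul_left]
  have h2 : ∀ y, (n : ℝ≥0∞) ^ k * (F y * M {y})
      = ∫⁻ ω, F y * ∑ e : Fin k → Fin n, (if ω ∘ e = y then 1 else 0) ∂P := by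
    intro y
    rw [mul_left_comm, h1, lintegral_const_mul _ Measurable.of_discrete]
  simp_rw [h2]
  rw [← lintegral_tsum (fun _ => (Measurable.of_discrete).aemeasurable)]
  refine lintegral_congr fun ω => ?_
  simp_rw [Finset.mul_sum]
  rw [Summable.tsum_finsetSum (fun _ _ => ENNReal.summable)]
  refine Finset.sum_congr rfl fun e _ => ?_
  rw [tsum_eq_single (ω ∘ e)]
  · simp
  · intro y hy
    simp [hy.symm]

lemma wt_ge_one {i : ℕ} (ω : Fin n → S) (a : Fin n) (h : i ≤ a.val) : 1 ≤ wt i ω a := by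
  unfold wt
  have ha := a.isLt
  have h1 : (1 : ℝ≥0∞) ≤ ((n - i : ℕ) : ℝ≥0∞) := by
    exact_mod_cast (by omega : 1 ≤ n - i)
  have h2 : (1 : ℝ≥0∞) ≤ (cnt 0 ω a : ℝ≥0∞) * (cnt i ω a : ℝ≥0∞)⁻¹ := by
    have hp : (cnt i ω a : ℝ≥0∞) ≠ 0 := by exact_mod_cast (cnt_pos ω h).ne'
    rw [← ENNReal.mul_inv_cancel hp (ENNReal.natCast_ne_top _)]
    gcongr
    exact cnt_anti i ω a
  exact one_le_mul h1 h2

lemma main (hn : 0 < n) (hexch : ∀ σ : Equiv.Perm (Fin n), P.map (fun x => x ∘ σ) = P)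
    (k : ℕ) (hk : k ≤ n) (M : Measure (Fin k → S))
    (hM : ∀ A : Set (Fin k → S), MeasurableSet A →
            M A = ∫⁻ Q : ProbabilityMeasure S,
              Measure.pi (fun _ : Fin k => (Q : Measure S)) A ∂(P.map (emp hn))) :
    klDiv (P.map (fst' hk)) M ≤ ENNReal.ofReal (∑ i : Fin k,
      (∫ ω, Real.log ((cnt i ω (Fin.castLE hk i) : ℝ) / ((n : ℝ) - i)) ∂P
        - ∫ ω, Real.log ((cnt 0 ω (Fin.castLE hk i) : ℝ) / n) ∂P)) := by
  classical
  have hfm : Measurable (fst' hk : (Fin n → S) → Fin k → S) := Measurable.of_discrete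
  have hn0 : (n : ℝ≥0∞) ^ k ≠ 0 := pow_ne_zero _ (by exact_mod_cast hn.ne')
  have hnt : (n : ℝ≥0∞) ^ k ≠ ⊤ := ENNReal.pow_ne_top (ENNReal.natCast_ne_top n)
  have hnR : (0 : ℝ) < n := by exact_mod_cast hn
  set Q := P.map (fst' hk) with hQ
  have : IsProbabilityMeasure Q := Measure.isProbabilityMeasure_map hfm.aemeasurable
  have hμn : IsProbabilityMeasure (P.map (emp (S := S) hn)) :=
    Measure.isProbabilityMeasure_map (Measurable.of_discrete).aemeasurable
  have : IsProbabilityMeasure M := ⟨by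
    rw [hM _ MeasurableSet.univ]; simp⟩
  have hkey : ∀ F : (Fin k → S) → ℝ≥0∞,
      ∫⁻ ω, F (fst' hk ω) * Wt hk ω ∂P ≤ (n : ℝ≥0∞) ^ k * ∫⁻ y, F y ∂M := by
    intro F
    rw [← lint_M P hn k M hM F]
    exact key P hexch k hk (fun _ y => F y) (fun _ _ _ => rfl)
  have hW1 : ∀ ω : Fin n → S, 1 ≤ Wt hk ω := by
    intro ω
    unfold Wt
    exact Finset.one_le_prod' (fun i _ => wt_ge_one ω _ (by simp))
  have hdom : ∀ s, Q s ≤ (n : ℝ≥0∞) ^ k * M s := by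
    intro s
    have hs : MeasurableSet s := (Set.to_countable s).measurableSet
    rw [← lintegral_indicator_one hs, ← lintegral_indicator_one hs, hQ,
      lintegral_map Measurable.of_discrete hfm]
    refine le_trans (lintegral_mono fun ω => ?_) (hkey _)
    exact le_mul_of_one_le_right bot_le (hW1 ω)
  have hac : Q ≪ M := by
    intro s hs
    have := hdom s
    rw [hs, mul_zero] at this
    exact nonpos_iff_eq_zero.1 this
  set f := Q.rnDeriv M with hf
  have hfb : ∀ᵐ y ∂M, f y ≤ (n : ℝ≥0∞) ^ k := by
    refine ae_le_of_forall_setLIntegral_le_of_sigmaFinite (Measure.measurable_rnDeriv _ _)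
      fun s hs _ => ?_
    rw [setLIntegral_const]
    exact (Measure.setLIntegral_rnDeriv_le s).trans (hdom s)
  have hllr : Integrable (llr Q M) Q := by
    rw [← integrable_rnDeriv_mul_log_iff hac]
    obtain ⟨C, hC⟩ := (isCompact_Icc (a := (0:ℝ)) (b := ((n : ℝ≥0∞) ^ k).toReal)).exists_bound_of_continuousOn
      (f := fun x => x * Real.log x) Real.continuous_mul_log.continuousOn
    refine Integrable.of_bound (Measurable.of_discrete).aestronglyMeasurable C ?_
    filter_upwards [hfb] with y hy
    exact hC _ ⟨ENNReal.toReal_nonneg, ENNReal.toReal_mono hnt hy⟩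
  have hlint : Integrable (fun ω => Real.log ((f (fst' hk ω)).toReal)) P :=
    hllr.comp_measurable hfm
  unfold klDiv
  rw [if_pos ⟨hac, hllr⟩]
  refine ENNReal.ofReal_le_ofReal ?_
  have h0 : ∫ y, llr Q M y ∂Q = ∫ ω, Real.log ((f (fst' hk ω)).toReal) ∂P := by
    rw [hQ, integral_map hfm.aemeasurable (Measurable.of_discrete).aestronglyMeasurable]
    rfl
  rw [h0]
  -- positivity
  have hApos : ∀ (i : Fin k) (ω : Fin n → S), (0 : ℝ) < cnt i ω (Fin.castLE hk i) := fun i ω => by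
    exact_mod_cast cnt_pos ω (by simp)
  have hNpos : ∀ (i : Fin k) (ω : Fin n → S), (0 : ℝ) < cnt 0 ω (Fin.castLE hk i) := fun i ω => by
    exact_mod_cast cnt_pos ω (Nat.zero_le _)
  have hmpos : ∀ i : Fin k, (0 : ℝ) < (n : ℝ) - i := fun i => by
    have : (i : ℕ) < n := by omega
    have : ((i : ℕ) : ℝ) < n := by exact_mod_cast this
    linarith
  set D : Fin k → (Fin n → S) → ℝ := fun i ω =>
    Real.log ((cnt i ω (Fin.castLE hk i) : ℝ) / ((n : ℝ) - i))
      - Real.log ((cnt 0 ω (Fin.castLE hk i) : ℝ) / n) with hD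
  have hDi1 : ∀ i : Fin k, Integrable
      (fun ω => Real.log ((cnt i ω (Fin.castLE hk i) : ℝ) / ((n : ℝ) - i))) P := fun i =>
    integ P i (Fin.castLE hk i) (fun p _ => Real.log ((p : ℝ) / ((n : ℝ) - i)))
  have hDi2 : ∀ i : Fin k, Integrable
      (fun ω => Real.log ((cnt 0 ω (Fin.castLE hk i) : ℝ) / n)) P := fun i =>
    integ P 0 (Fin.castLE hk i) (fun _ q => Real.log ((q : ℝ) / n))
  have hDi : ∀ i, Integrable (D i) P := fun i => (hDi1 i).sub (hDi2 i)
  have hDsum : ∫ ω, ∑ i, D i ω ∂P = ∑ i : Fin k,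
      (∫ ω, Real.log ((cnt i ω (Fin.castLE hk i) : ℝ) / ((n : ℝ) - i)) ∂P
        - ∫ ω, Real.log ((cnt 0 ω (Fin.castLE hk i) : ℝ) / n) ∂P) := by
    rw [integral_finsetSum _ (fun i _ => hDi i)]
    exact Finset.sum_congr rfl fun i _ => integral_sub (hDi1 i) (hDi2 i)
  rw [← hDsum]
  -- the real ratio
  set G : (Fin n → S) → ℝ≥0∞ := fun ω => f (fst' hk ω) * Wt hk ω * ((n : ℝ≥0∞) ^ k)⁻¹ with hG
  have hG1 : ∫⁻ ω, G ω ∂P ≤ 1 := by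
    simp only [hG]
    rw [lintegral_mul_const _ Measurable.of_discrete]
    calc _ ≤ ((n : ℝ≥0∞) ^ k * ∫⁻ y, f y ∂M) * ((n : ℝ≥0∞) ^ k)⁻¹ := by gcongr; exact hkey f
      _ ≤ ((n : ℝ≥0∞) ^ k * 1) * ((n : ℝ≥0∞) ^ k)⁻¹ := by
          gcongr
          exact Measure.lintegral_rnDeriv_le.trans (by simp)
      _ = 1 := by rw [mul_one, ENNReal.mul_inv_cancel hn0 hnt]
  have hGint : Integrable (fun ω => (G ω).toReal) P :=
    integrable_toReal_of_lintegral_ne_top (Measurable.of_discrete).aemeasurable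
      (ne_top_of_le_ne_top ENNReal.one_ne_top hG1)
  have hGi : ∫ ω, (G ω).toReal ∂P ≤ 1 := by
    rw [integral_toReal (Measurable.of_discrete).aemeasurable
      (ae_lt_top Measurable.of_discrete (ne_top_of_le_ne_top ENNReal.one_ne_top hG1))]
    exact ENNReal.toReal_le_of_le_ofReal zero_le_one (by simpa using hG1)
  have hWexp : ∀ ω : Fin n → S, (Wt hk ω * ((n : ℝ≥0∞) ^ k)⁻¹).toReal
      = Real.exp (- ∑ i, D i ω) := by
    intro ω
    have e1 : ∀ i : Fin k, Real.exp (- D i ω) = (wt i ω (Fin.castLE hk i)).toReal * (n : ℝ)⁻¹ := by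
      intro i
      have hA := hApos i ω
      have hN := hNpos i ω
      have hm := hmpos i
      have hcast : ((n - (i : ℕ) : ℕ) : ℝ) = (n : ℝ) - i := Nat.cast_sub (by omega)
      simp only [hD, wt, neg_sub]
      rw [Real.exp_sub, Real.exp_log (by positivity), Real.exp_log (by positivity)]
      simp only [ENNReal.toReal_mul, ENNReal.toReal_inv, ENNReal.toReal_natCast]
      rw [hcast]
      field_simp
    rw [← Finset.sum_neg_distrib, Real.exp_sum, Finset.prod_congr rfl (fun i _ => e1 i),
      Finset.prod_mul_distrib, Wt, ENNReal.toReal_mul, ENNReal.toReal_prod]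
    simp
  have hpos : ∀ᵐ ω ∂P, 0 < (f (fst' hk ω)).toReal := by
    have : ∀ᵐ y ∂Q, 0 < (f y).toReal := by
      filter_upwards [Measure.rnDeriv_pos hac, hac.ae_le (Measure.rnDeriv_lt_top Q M)] with y h1 h2
      exact ENNReal.toReal_pos h1.ne' h2.ne
    exact ae_of_ae_map hfm.aemeasurable this
  have hfinal : ∫ ω, (Real.log ((f (fst' hk ω)).toReal) - ∑ i, D i ω) ∂P
      ≤ ∫ ω, ((G ω).toReal - 1) ∂P := by
    refine integral_mono_ae (hlint.sub (integrable_finsetSum _ (fun i _ => hDi i)))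
      (hGint.sub (integrable_const 1)) ?_
    filter_upwards [hpos] with ω hω
    have e : (G ω).toReal = (f (fst' hk ω)).toReal * Real.exp (- ∑ i, D i ω) := by
      rw [← hWexp, ← ENNReal.toReal_mul, ← mul_assoc]
    have := Real.log_le_sub_one_of_pos (x := (G ω).toReal) (by rw [e]; positivity)
    have e2 : Real.log (G ω).toReal = Real.log ((f (fst' hk ω)).toReal) - ∑ i, D i ω := by
      rw [e, Real.log_mul hω.ne' (Real.exp_pos _).ne', Real.log_exp]; ring
    rw [← e2]; exact this
  rw [integral_sub hlint (integrable_finsetSum _ (fun i _ => hDi i)),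
    integral_sub hGint (integrable_const 1)] at hfinal
  simp only [integral_const, probReal_univ, smul_eq_mul, mul_one] at hfinal
  linarith

end

end DF

/-- **Finite de Finetti theorem in relative entropy with an entropy-dependent bound**
(Gavalakis–Berta). If `P` is the (exchangeable) joint law of `X₁,…,Xₙ` with values
in a discrete (finite or countably infinite) set `S` with `H(X₁)` finite, then there is a
probability measure `μ*ₙ` on `(ℳ(S),ℱ)` such that, for every `k ≤ n − 2`, the law `P_k` of
`X₁,…,X_k` satisfies `D(P_k ‖ M_{k,μ*ₙ}) ≤ (k(k−1)/(2(n−k−1))) · H(X₁)`. -/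
theorem finite_deFinetti_relEntropy_entropyBound
    {S : Type*} [Countable S] [MeasurableSpace S] [MeasurableSingletonClass S] {n : ℕ}
    (hn : 0 < n)
    (P : Measure (Fin n → S)) [IsProbabilityMeasure P]
    (hexch : ∀ σ : Equiv.Perm (Fin n), P.map (fun x => x ∘ σ) = P)
    (hH : Summable fun x : S =>
      -((P.map (fun ω => ω ⟨0, hn⟩) {x}).toReal *
          Real.log (P.map (fun ω => ω ⟨0, hn⟩) {x}).toReal)) :
    ∃ μn : Measure (ProbabilityMeasure S), IsProbabilityMeasure μn ∧
      ∀ (k : ℕ) (hkn : k ≤ n - 2) (M : Measure (Fin k → S)),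
        (∀ A : Set (Fin k → S), MeasurableSet A →
            M A = ∫⁻ Q : ProbabilityMeasure S,
              Measure.pi (fun _ : Fin k => (Q : Measure S)) A ∂μn) →
        klDiv (P.map (fun x (i : Fin k) =>
            x (Fin.castLE (le_trans hkn (Nat.sub_le n 2)) i))) M ≤
          ENNReal.ofReal ((k * (k - 1) : ℝ) / (2 * ((n : ℝ) - k - 1)) *
            shannonEntropy (P.map (fun ω => ω ⟨0, hn⟩))) := by
  classical
  refine ⟨P.map (DF.emp hn),
    Measure.isProbabilityMeasure_map (Measurable.of_discrete).aemeasurable, ?_⟩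
  intro k hkn M hM
  have hk : k ≤ n := le_trans hkn (Nat.sub_le n 2)
  refine (DF.main P hn hexch k hk M hM).trans (ENNReal.ofReal_le_ofReal ?_)
  set H := shannonEntropy (P.map (fun ω => ω ⟨0, hn⟩)) with hHdef
  rcases Nat.eq_zero_or_pos k with rfl | hk0
  · simp
  have hn3 : k + 2 ≤ n := by omega
  have hn3R : (k : ℝ) + 2 ≤ n := by exact_mod_cast hn3
  have hk1R : (1 : ℝ) ≤ k := by exact_mod_cast hk0
  have hE := DF.entE P hn hexch hH
  set E := ∫ ω, Real.log ((DF.cnt 0 ω ⟨0, hn⟩ : ℝ) / n) ∂P with hEdef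
  have hE0 : E ≤ 0 := by
    refine integral_nonpos fun ω => ?_
    refine Real.log_nonpos (by positivity) ?_
    rw [div_le_one (by linarith)]
    exact_mod_cast DF.cnt_le 0 ω _
  have hterm : ∀ i : Fin k,
      (∫ ω, Real.log ((DF.cnt i ω (Fin.castLE hk i) : ℝ) / ((n : ℝ) - i)) ∂P
        - ∫ ω, Real.log ((DF.cnt 0 ω (Fin.castLE hk i) : ℝ) / n) ∂P)
      ≤ (i : ℝ) * (-E / (n - 1)) := by
    intro i
    have h1 := DF.stepE P hexch (Fin.castLE hk i) (by omega) _ rfl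
    simp only [Fin.val_castLE] at h1
    rw [DF.logN_eq P hexch (Fin.castLE hk i) ⟨0, hn⟩] at h1 ⊢
    rw [← hEdef] at h1 ⊢
    have hne : (n : ℝ) - 1 ≠ 0 := by linarith
    have e : ((n : ℝ) - i - 1) / (n - 1) * E - E = (i : ℝ) * (-E / (n - 1)) := by
      field_simp; ring
    linarith
  refine (Finset.sum_le_sum fun i _ => hterm i).trans ?_
  rw [← Finset.sum_mul, Fin.sum_univ_eq_sum_range (fun i => (i : ℝ)) k]
  have hg : ∑ i ∈ Finset.range k, (i : ℝ) = k * (k - 1) / 2 := by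
    clear * -
    induction k with
    | zero => simp
    | succ k ih => rw [Finset.sum_range_succ, ih]; push_cast; ring
  rw [hg]
  have hc : 0 ≤ (k : ℝ) * (k - 1) / 2 := by
    have : 0 ≤ (k : ℝ) - 1 := by linarith
    positivity
  have hH0 : 0 ≤ H := by linarith
  have h1 : -E / ((n : ℝ) - 1) ≤ H / ((n : ℝ) - k - 1) := by
    apply div_le_div₀ hH0 hE <;> linarith
  calc _ ≤ (k : ℝ) * (k - 1) / 2 * (H / ((n : ℝ) - k - 1)) := by gcongr
    _ = _ := by
      have : (n : ℝ) - k - 1 ≠ 0 := by linarith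
      field_simp
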